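/- arXiv:1110.1158 — 2 statements merged into one kernel-verified Lean document; each statement's English description precedes it below -/
import Mathlib

section
/- Let X be an aspherical topological space and let h : C(Circle, X) be a free loop, with α ∈ FundamentalGroup X (h 1) the class of the based loop t ↦ h(exp(2πit)). Then the fundamental group of the free loop space at h is isomorphic to the centralizer of α: there is a group isomorphism FundamentalGroup C(Circle, X) h ≃* Subgroup.centralizer {α}. -/
attribute [local instance] Path.Homotopic.setoid

/-- The based loop `t ↦ a (exp (2 π i t))` at `x` associated to a free loop
`a : C(Circle, X)` with `a 1 = x`. -/
noncomputable def basedLoopOf {X : Type*} [TopologicalSpace X] {x : X}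
    (a : C(Circle, X)) (ha : a 1 = x) : Path x x where
  toFun t := a (Circle.exp (2 * Real.pi * t))
  continuous_toFun := by fun_prop
  source' := by simp [ha]
  target' := by simp [ha]

/-- The class in the fundamental group `π₁(X, x)` of the based loop associated to a free
loop `a : C(Circle, X)` with `a 1 = x`. -/
noncomputable def loopClass {X : Type*} [TopologicalSpace X] {x : X}
    (a : C(Circle, X)) (ha : a 1 = x) : FundamentalGroup X x :=
  FundamentalGroup.fromPath (X := TopCat.of X) ⟦basedLoopOf a ha⟧

open unitInterval Topology CategoryTheory

/-!
Write `a` for the based loop of `h`, and consider the map `π₁(LX, h) → π₁(X, h 1)` induced by the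
evaluation `f ↦ f 1` on the free loop space `LX`.

A loop `p` at `h 1` lets us slide the free loop `h` along `p`, which ends at the based loop
`p⁻¹ · a · p`. If `p` commutes with `a` up to homotopy, we can return to `h` through based loops,
so `p` lifts to `π₁(LX, h)`; conversely, a loop in `LX` at `h` is a map of a torus to `X`, whose
two generating circles commute. Hence the image is the centralizer of `a`.

If a loop in `LX` evaluates to a null-homotopic loop, sliding along a null-homotopy deforms it into
a loop of based loops. All components of the based loop space `ΩX` that are related by
concatenation have isomorphic fundamental groups, namely `π₁(ΩX, const) = π₂(X) = 0`. Hence the map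
is injective.
-/

namespace FreeLoop

section FundamentalGroup

variable {Y Z : Type*} [TopologicalSpace Y] [TopologicalSpace Z]

lemma map_eq_one_of_homotopic {f g : C(Y, Z)} (hfg : f.Homotopic g) {y : Y}
    {p : FundamentalGroup Y y} (hp : FundamentalGroup.map f y p = 1) :
    FundamentalGroup.map g y p = 1 := by
  obtain ⟨H⟩ := hfg
  let η := FundamentalGroupoidFunctor.homotopicMapsNatIso H
  have hf : (FundamentalGroupoid.map f).map p = 𝟙 _ := hp
  have naturality := η.naturality p
  rw [hf, Category.id_comp] at naturality
  exact (cancel_epi (η.app _)).1 (naturality.symm.trans (Category.comp_id _).symm)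

lemma map_eq_one_of_homotopic_comp {W : Type*} [TopologicalSpace W] {f : C(Y, Z)} {g : C(W, Z)}
    {k : C(Y, W)} (hf : f.Homotopic (g.comp k)) {y : Y}
    (hk : Subsingleton (FundamentalGroup W (k y))) (p : FundamentalGroup Y y) :
    FundamentalGroup.map f y p = 1 := by
  have hkp : FundamentalGroup.map k y p = 1 := Subsingleton.elim _ _
  refine map_eq_one_of_homotopic hf.symm ?_
  rw [← map_one (FundamentalGroup.map g (k y)), ← hkp]
  exact Path.Homotopic.Quotient.map_comp

lemma subsingleton_fundamentalGroup_of_homotopic_id {f : C(Y, Z)} {g : C(Z, Y)}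
    (hgf : (g.comp f).Homotopic (.id Y)) {y : Y} (hf : Subsingleton (FundamentalGroup Z (f y))) :
    Subsingleton (FundamentalGroup Y y) := by
  refine subsingleton_of_forall_eq 1 fun p => ?_
  obtain ⟨γ, rfl⟩ := Path.Homotopic.Quotient.mk_surjective p
  exact map_eq_one_of_homotopic_comp hgf.symm hf (.mk γ)

end FundamentalGroup

section PathSpace

variable {X : Type*} [TopologicalSpace X] {x y z : X}

/-- A homotopy of paths rel endpoints, viewed as a path in the space of paths. -/
def pathOfHomotopy {p q : Path x y} (H : p.Homotopy q) : Path p q where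
  toFun := H.eval
  continuous_toFun := Path.continuous_uncurry_iff.1 H.continuous
  source' := H.eval_zero
  target' := H.eval_one

/-- Concatenation on the right with a fixed path, as a map of path spaces. -/
noncomputable def transRight (x : X) (q : Path y z) : C(Path x y, Path x z) where
  toFun p := p.trans q
  continuous_toFun := by fun_prop

lemma transRight_homotopic {q q' : Path y z} (hq : q.Homotopic q') :
    (transRight x q).Homotopic (transRight x q') := by
  obtain ⟨H⟩ := hq
  exact ⟨{
    toFun w := w.2.trans (pathOfHomotopy H w.1)
    continuous_toFun := by fun_prop
    map_zero_left p := by simp [transRight]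
    map_one_left p := by simp [transRight] }⟩

lemma homotopic_of_eq_reparam {Y : Type*} [TopologicalSpace Y] {F G : C(Y, Path x y)} {φ : I → I}
    (hφ : Continuous φ) (hφ₀ : φ 0 = 0) (hφ₁ : φ 1 = 1)
    (hF : ∀ w, F w = (G w).reparam φ hφ hφ₀ hφ₁) : F.Homotopic G := by
  refine .symm ⟨{
    toFun w := (Path.Homotopy.reparam (G w.2) φ hφ hφ₀ hφ₁).eval w.1
    continuous_toFun := Path.continuous_uncurry_iff.1 ?_
    map_zero_left p := by simp
    map_one_left p := by simp [hF] }⟩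
  change Continuous fun w : (I × Y) × I => G w.1.2 ⟨σ w.1.1 * w.2 + w.1.1 * φ w.2, _⟩
  fun_prop

lemma transRight_comp_transRight_homotopic {w : X} (p : Path y z) (q : Path z w) :
    ((transRight x q).comp (transRight x p)).Homotopic (transRight x (p.trans q)) :=
  homotopic_of_eq_reparam _ _ _ fun r => Path.Homotopy.trans_assoc_reparam r p q

lemma transRight_refl_homotopic_id : (transRight x (.refl y)).Homotopic (.id (Path x y)) :=
  homotopic_of_eq_reparam _ _ _ fun r => Path.Homotopy.trans_refl_reparam r

lemma transRight_comp_transRight_symm_homotopic_id (p : Path z y) :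
    ((transRight x p).comp (transRight x p.symm)).Homotopic (.id (Path x y)) :=
  ((transRight_comp_transRight_homotopic p.symm p).trans
    (transRight_homotopic ⟨(Path.Homotopy.reflSymmTrans p).symm⟩)).trans
    transRight_refl_homotopic_id

lemma subsingleton_fundamentalGroup_path
    (hx : Subsingleton (FundamentalGroup (Path x x) (.refl x))) (a : Path x y) :
    Subsingleton (FundamentalGroup (Path x y) a) := by
  have e := FundamentalGroup.fundamentalGroupMulEquivOfPath
    (pathOfHomotopy (Path.Homotopy.reflTransSymm a))
  exact subsingleton_fundamentalGroup_of_homotopic_id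
    (transRight_comp_transRight_symm_homotopic_id a) e.symm.toEquiv.subsingleton

/-- Mathlib's `genLoopEquivOfUnique`, upgraded to a homeomorphism. -/
def genLoopHomeoOfUnique (N : Type*) [Unique N] (x : X) : GenLoop N X x ≃ₜ Path x x where
  toEquiv := genLoopEquivOfUnique N
  continuous_toFun := by
    refine Path.continuous_uncurry_iff.1 ?_
    change Continuous fun w : GenLoop N X x × I => w.1 fun _ => w.2
    fun_prop
  continuous_invFun := by
    refine Continuous.subtype_mk (ContinuousMap.continuous_of_continuous_uncurry _ ?_) _
    change Continuous fun w : Path x x × (N → I) => w.1 (w.2 default)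
    fun_prop

lemma subsingleton_fundamentalGroup_path_refl {N : Type*} (i : N) [Unique {j // j ≠ i}]
    (hx : Subsingleton (HomotopyGroup N X x)) :
    Subsingleton (FundamentalGroup (Path x x) (.refl x)) := by
  classical
  let e := genLoopHomeoOfUnique {j // j ≠ i} x
  have he : (ContinuousMap.comp e (e.symm : C(Path x x, GenLoop {j // j ≠ i} X x))).Homotopic
      (.id _) := by
    rw [e.toContinuousMap_comp_symm]
  exact subsingleton_fundamentalGroup_of_homotopic_id he
    (homotopyGroupEquivFundamentalGroup i).symm.subsingleton

end PathSpace

section Circle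

/-- The standard parametrisation `t ↦ exp (2πit)` of the circle, as a loop at `1`. -/
noncomputable def circleLoop : Path (1 : Circle) 1 := basedLoopOf (.id Circle) rfl

lemma circleLoop_apply (t : I) : circleLoop t = Circle.exp (2 * Real.pi * t) := rfl

lemma circleLoop_surjective : Function.Surjective circleLoop := by
  intro z
  obtain ⟨θ, hθ, hz⟩ := Circle.periodic_exp.exists_mem_Ico₀ Real.two_pi_pos (Complex.arg z)
  have hmem : θ / (2 * Real.pi) ∈ I :=
    ⟨div_nonneg hθ.1 Real.two_pi_pos.le, div_le_one_of_le₀ hθ.2.le Real.two_pi_pos.le⟩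
  refine ⟨⟨_, hmem⟩, ?_⟩
  rw [circleLoop_apply, mul_div_cancel₀ θ Real.two_pi_pos.ne', ← hz, Circle.exp_arg]

lemma circleLoop_injOn : Set.InjOn circleLoop (Set.Iio 1) := by
  intro s hs t ht hst
  have angle_mem {r : I} (hr : r < 1) : 2 * Real.pi * r ∈ Set.Ico 0 (2 * Real.pi) :=
    ⟨mul_nonneg Real.two_pi_pos.le r.2.1, mul_lt_of_lt_one_right Real.two_pi_pos hr⟩
  exact Subtype.ext <| mul_left_cancel₀ Real.two_pi_pos.ne' <|
    Circle.exp_injOn_Ico (sub_zero _).le (angle_mem hs) (angle_mem ht) hst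

lemma factorsThrough_circleLoop {A : Type*} {f : I → A} (hf : f 0 = f 1) :
    Function.FactorsThrough f circleLoop := by
  have exists_lt_one (t : I) : ∃ s < 1, circleLoop s = circleLoop t ∧ f s = f t := by
    rcases lt_or_eq_of_le (le_one' (t := t)) with ht | rfl
    · exact ⟨t, ht, rfl, rfl⟩
    · exact ⟨0, zero_lt_one, circleLoop.source.trans circleLoop.target.symm, hf⟩
  intro s t hst
  obtain ⟨s', hs', hs'e, hs'f⟩ := exists_lt_one s
  obtain ⟨t', ht', ht'e, ht'f⟩ := exists_lt_one t
  have : s' = t' := circleLoop_injOn hs' ht' (hs'e.trans (hst.trans ht'e.symm))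
  rw [← hs'f, ← ht'f, this]

variable {X Y : Type*} [TopologicalSpace X] [TopologicalSpace Y]

lemma apply_one_eq (f : C(Circle, X)) : f 1 = f (circleLoop 0) :=
  congrArg f circleLoop.source.symm

lemma loop_ext {f g : C(Circle, X)} (hfg : ∀ t, f (circleLoop t) = g (circleLoop t)) : f = g :=
  ContinuousMap.ext <| circleLoop_surjective.forall.2 hfg

lemma isQuotientMap_prodMap_circleLoop (Y : Type*) [TopologicalSpace Y] :
    IsQuotientMap ((ContinuousMap.id Y).prodMap (circleLoop : C(I, Circle))) := by
  have hproper : IsProperMap (Prod.map id circleLoop : Y × I → Y × Circle) :=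
    isProperMap_id.prodMap circleLoop.continuous.isProperMap
  exact hproper.isClosedMap.isQuotientMap hproper.continuous
    (Function.surjective_id.prodMap circleLoop_surjective)

/-- The family of free loops obtained from a family of closed paths by passing to the quotient
`Circle` of the unit interval. -/
noncomputable def loopOfClosedPath (F : C(Y × I, X)) (hF : ∀ y, F (y, 0) = F (y, 1)) :
    C(Y, C(Circle, X)) :=
  ((isQuotientMap_prodMap_circleLoop Y).lift F (by
    rintro ⟨y, s⟩ ⟨y', t⟩ hst
    obtain ⟨rfl, hst⟩ := Prod.ext_iff.1 hst
    exact factorsThrough_circleLoop (f := fun t => F (y, t)) (hF y) hst)).curry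

lemma loopOfClosedPath_circleLoop (F : C(Y × I, X)) (hF : ∀ y, F (y, 0) = F (y, 1)) (y : Y)
    (t : I) : loopOfClosedPath F hF y (circleLoop t) = F (y, t) :=
  DFunLike.congr_fun ((isQuotientMap_prodMap_circleLoop Y).lift_comp F _) (y, t)

/-- The inclusion of the based loop space at `x` into the free loop space. -/
noncomputable def ofBasedLoop (x : X) : C(Path x x, C(Circle, X)) :=
  loopOfClosedPath ⟨fun w => w.1 w.2, by fun_prop⟩ (by simp)

lemma ofBasedLoop_circleLoop {x : X} (p : Path x x) (t : I) :
    ofBasedLoop x p (circleLoop t) = p t :=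
  loopOfClosedPath_circleLoop _ _ p t

lemma ofBasedLoop_one {x : X} (p : Path x x) : ofBasedLoop x p 1 = x := by
  rw [apply_one_eq (ofBasedLoop x p), ofBasedLoop_circleLoop, p.source]

lemma ofBasedLoop_basedLoopOf (h : C(Circle, X)) : ofBasedLoop (h 1) (basedLoopOf h rfl) = h :=
  loop_ext fun t => ofBasedLoop_circleLoop _ t

end Circle

section EvalFiber

variable {X : Type*} [TopologicalSpace X] {x : X}

/-- The homotopy fibre over `x` of the evaluation `f ↦ f 1` on the free loop space: a free loop
together with a path from its value at `1` to `x`. The path is recorded as a continuous map on `I`,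
since its starting point varies. -/
abbrev EvalFiber (x : X) : Type _ :=
  {w : C(Circle, X) × C(I, X) // w.2 0 = w.1 1 ∧ w.2 1 = x}

namespace EvalFiber

/-- The free loop underlying a point of the homotopy fibre of the evaluation. -/
noncomputable def loop : C(EvalFiber x, C(Circle, X)) where
  toFun w := w.1.1
  continuous_toFun := by fun_prop

/-- The path component of a point of the homotopy fibre of the evaluation. -/
noncomputable def path (w : EvalFiber x) : Path (loop w 1) x where
  toContinuousMap := w.1.2
  source' := w.2.1
  target' := w.2.2

/-- The point of the homotopy fibre of the evaluation given by a free loop and a path. -/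
noncomputable def mk (f : C(Circle, X)) (r : Path (f 1) x) : EvalFiber x :=
  ⟨(f, r), r.source, r.target⟩

lemma continuous_path : Continuous fun v : EvalFiber x × I => path v.1 v.2 := by
  change Continuous fun v : EvalFiber x × I => v.1.1.2 v.2
  fun_prop

lemma continuous_basedLoopOf_loop :
    Continuous fun v : EvalFiber x × I => basedLoopOf (loop v.1) rfl v.2 := by
  change Continuous fun v : EvalFiber x × I => v.1.1.1 (Circle.exp (2 * Real.pi * v.2))
  fun_prop

/-- The conjugate `r⁻¹ · f · r` of the free loop `f` by the path `r`, a loop based at `x`. -/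
noncomputable def conj (x : X) : C(EvalFiber x, Path x x) where
  toFun w := ((path w).symm.trans (basedLoopOf (loop w) rfl)).trans (path w)
  continuous_toFun := Path.continuous_uncurry_iff.1 <|
    Path.trans_continuous_family _
      (Path.trans_continuous_family _ (Path.symm_continuous_family _ continuous_path)
        _ continuous_basedLoopOf_loop)
      _ continuous_path

lemma conj_extend_outgoing (w : EvalFiber x) (u : I) :
    (conj x w).extend ((1 - u) / 4) = path w u := by
  change (((path w).symm.trans _).trans _).extend _ = _
  rw [Path.extend_trans_of_le_half _ _ (by linarith [u.2.1]),
    Path.extend_trans_of_le_half _ _ (by linarith [u.2.1]), Path.extend_symm_apply,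
    ← Path.extend_extends']
  congr 1
  ring

lemma conj_extend_middle (w : EvalFiber x) (t : I) :
    (conj x w).extend ((1 + t) / 4) = loop w (circleLoop t) := by
  change (((path w).symm.trans (basedLoopOf (loop w) rfl)).trans _).extend _ =
    basedLoopOf (loop w) rfl t
  rw [Path.extend_trans_of_le_half _ _ (by linarith [t.2.2]),
    Path.extend_trans_of_half_le _ _ (by linarith [t.2.1]), ← Path.extend_extends']
  congr 1
  ring

lemma conj_extend_returning (w : EvalFiber x) (u : I) :
    (conj x w).extend ((1 + u) / 2) = path w u := by
  change (Path.trans _ (path w)).extend _ = _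
  rw [Path.extend_trans_of_half_le _ _ (by linarith [u.2.1]), ← Path.extend_extends']
  congr 1
  ring

/-- The free loop at time `u` of the homotopy `EvalFiber.slide`: the restriction of the path
`r⁻¹ · f · r` to the interval `[(1 - u) / 4, (1 + u) / 2]`, which is closed because both of its
endpoints are `r u`. -/
noncomputable def slideLoop (x : X) : C(I × EvalFiber x, C(Circle, X)) :=
  loopOfClosedPath
    ⟨fun v => (conj x v.1.2).extend ((1 - v.2) * ((1 - v.1.1) / 4) + v.2 * ((1 + v.1.1) / 2)),
      Continuous.pathExtend (by fun_prop) (by fun_prop)⟩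
    fun v => by simp [conj_extend_outgoing, conj_extend_returning]

lemma slideLoop_circleLoop (u : I) (w : EvalFiber x) (t : I) :
    slideLoop x (u, w) (circleLoop t) =
      (conj x w).extend ((1 - t) * ((1 - u) / 4) + t * ((1 + u) / 2)) :=
  loopOfClosedPath_circleLoop _ _ _ t

lemma slideLoop_one (u : I) (w : EvalFiber x) : slideLoop x (u, w) 1 = path w u := by
  rw [apply_one_eq (slideLoop x (u, w)), slideLoop_circleLoop]
  simp [conj_extend_outgoing]

/-- Every free loop `f` with a path `r` from `f 1` to `x` slides along `r` to the based loop
`r⁻¹ · f · r`. -/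
noncomputable def slide (x : X) :
    (loop : C(EvalFiber x, C(Circle, X))).Homotopy ((ofBasedLoop x).comp (conj x)) where
  toContinuousMap := slideLoop x
  map_zero_left w := loop_ext fun t => by
    refine (slideLoop_circleLoop 0 w t).trans (.trans ?_ (conj_extend_middle w t))
    congr 1
    simp only [Set.Icc.coe_zero]
    ring
  map_one_left w := loop_ext fun t => by
    refine (slideLoop_circleLoop 1 w t).trans (.trans ?_ (ofBasedLoop_circleLoop _ t).symm)
    rw [← Path.extend_extends']
    congr 1
    simp only [Set.Icc.coe_one]
    ring

end EvalFiber

end EvalFiber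

section Evaluation

variable {X : Type*} [TopologicalSpace X]

/-- The homomorphism on fundamental groups induced by the evaluation `f ↦ f 1`, whose value at `h`
is `h 1`. -/
noncomputable def evalHom (h : C(Circle, X)) :
    FundamentalGroup C(Circle, X) h →* FundamentalGroup X (h 1) :=
  FundamentalGroup.map ⟨fun f => f 1, by fun_prop⟩ h

lemma evalHom_mk {h : C(Circle, X)} (γ : Path h h) :
    evalHom h (.mk γ) = .mk (γ.map (continuous_eval_const 1)) := rfl

lemma basedLoopOf_trans_homotopic {f g : C(Circle, X)} (γ : Path f g) :
    ((basedLoopOf f rfl).trans (γ.map (continuous_eval_const 1))).Homotopic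
      ((γ.map (continuous_eval_const 1)).trans (basedLoopOf g rfl)) :=
  let H : f.Homotopy g := {
    toFun v := γ v.1 v.2
    map_zero_left := by simp
    map_one_left := by simp }
  Path.Homotopic.map_trans_evalAt H circleLoop

lemma exists_map_eval_eq_trans_refl {h : C(Circle, X)} {p : Path (h 1) (h 1)}
    (hp : (EvalFiber.conj (h 1) (.mk h p)).Homotopic (basedLoopOf h rfl)) :
    ∃ γ : Path h h, γ.map (continuous_eval_const 1) = p.trans (.refl (h 1)) := by
  obtain ⟨H⟩ := hp
  let γ₁ : Path h _ := (EvalFiber.slide (h 1)).evalAt (.mk h p)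
  let γ₂ := (pathOfHomotopy H).map (ofBasedLoop (h 1)).continuous
  refine ⟨γ₁.trans (γ₂.cast rfl (ofBasedLoop_basedLoopOf h).symm), ?_⟩
  have hγ₁ (u : I) : γ₁ u 1 = p u := EvalFiber.slideLoop_one u _
  have hγ₂ (u : I) : γ₂ u 1 = h 1 := ofBasedLoop_one _
  ext u
  simp only [Path.map_coe, Function.comp_apply, Path.trans_apply]
  split_ifs <;> simp [hγ₁, hγ₂]

lemma conj_mk_homotopic {x : X} {f : C(Circle, X)} {p : Path (f 1) x} {a : Path x x}
    (hp : ((basedLoopOf f rfl).trans p).Homotopic (p.trans a)) :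
    (EvalFiber.conj x (.mk f p)).Homotopic a := by
  rw [← Path.Homotopic.Quotient.eq, Path.Homotopic.Quotient.mk_trans,
    Path.Homotopic.Quotient.mk_trans] at hp
  refine Path.Homotopic.Quotient.eq.1 ?_
  change Path.Homotopic.Quotient.mk ((p.symm.trans (basedLoopOf f rfl)).trans p) = _
  rw [Path.Homotopic.Quotient.mk_trans, Path.Homotopic.Quotient.mk_trans,
    Path.Homotopic.Quotient.trans_assoc, hp, ← Path.Homotopic.Quotient.trans_assoc,
    Path.Homotopic.Quotient.mk_symm, Path.Homotopic.Quotient.symm_trans,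
    Path.Homotopic.Quotient.refl_trans]

theorem range_evalHom (h : C(Circle, X)) :
    (evalHom h).range = Subgroup.centralizer {loopClass h rfl} := by
  ext b
  obtain ⟨p, rfl⟩ := Path.Homotopic.Quotient.mk_surjective b
  rw [Subgroup.mem_centralizer_singleton_iff]
  constructor
  · rintro ⟨c, hc⟩
    obtain ⟨γ, rfl⟩ := Path.Homotopic.Quotient.mk_surjective c
    rw [← hc]
    exact Path.Homotopic.Quotient.eq.2 (basedLoopOf_trans_homotopic γ)
  · intro hp
    obtain ⟨γ, hγ⟩ := exists_map_eval_eq_trans_refl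
      (conj_mk_homotopic (Path.Homotopic.Quotient.exact hp))
    refine ⟨.mk γ, ?_⟩
    rw [evalHom_mk, hγ]
    exact Path.Homotopic.Quotient.eq.2 (.trans_refl p)

lemma exists_map_loop_eq {h : C(Circle, X)} {γ : Path h h}
    (hγ : (γ.map (continuous_eval_const 1)).Homotopic (.refl (h 1))) :
    ∃ δ : Path (EvalFiber.mk h (.refl _)) (EvalFiber.mk h (.refl _)),
      δ.map EvalFiber.loop.continuous = γ := by
  obtain ⟨N⟩ := hγ
  let δ : C(I, EvalFiber (h 1)) :=
    ⟨fun s => ⟨(γ s, ⟨fun u => N (u, s), by fun_prop⟩), by simp, by simp⟩,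
      .subtype_mk (.prodMk (by fun_prop)
        (ContinuousMap.continuous_of_continuous_uncurry _ (by dsimp; fun_prop))) _⟩
  refine ⟨⟨δ, ?_, ?_⟩, rfl⟩ <;>
    refine Subtype.ext (Prod.ext ?_ (ContinuousMap.ext fun u => ?_)) <;>
    simp [δ, EvalFiber.mk]

theorem evalHom_injective {h : C(Circle, X)}
    (hX : Subsingleton (FundamentalGroup (Path (h 1) (h 1)) (.refl (h 1)))) :
    Function.Injective (evalHom h) := by
  refine (injective_iff_map_eq_one _).2 fun c hc => ?_
  obtain ⟨γ, rfl⟩ := Path.Homotopic.Quotient.mk_surjective c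
  obtain ⟨δ, hδ⟩ := exists_map_loop_eq (Path.Homotopic.Quotient.exact hc)
  rw [← hδ]
  exact map_eq_one_of_homotopic_comp ⟨EvalFiber.slide (h 1)⟩
    (subsingleton_fundamentalGroup_path hX _) (.mk δ)

end Evaluation

end FreeLoop

theorem fundamentalGroup_freeLoopSpace_iso_centralizer_general {X : Type*} [TopologicalSpace X]
    (h : C(Circle, X)) (hX : Subsingleton (HomotopyGroup (Fin 2) X (h 1)))
    (α : FundamentalGroup X (h 1)) (hα : α = loopClass h rfl) :
    Nonempty (FundamentalGroup C(Circle, X) h ≃*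
      Subgroup.centralizer ({α} : Set (FundamentalGroup X (h 1)))) := by
  subst hα
  have : Unique {j : Fin 2 // j ≠ 0} := ⟨⟨⟨1, one_ne_zero⟩⟩, by decide⟩
  have hinj : Function.Injective (FreeLoop.evalHom h) :=
    FreeLoop.evalHom_injective (FreeLoop.subsingleton_fundamentalGroup_path_refl 0 hX)
  exact ⟨(MonoidHom.ofInjective hinj).trans (MulEquiv.subgroupCongr (FreeLoop.range_evalHom h))⟩

/-- If `X` is aspherical (all homotopy groups `π_n` for `n ≥ 2` are trivial), then the
fundamental group of the free loop space `C(Circle, X)` at a free loop `h` is isomorphic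
to the centralizer in `π₁(X, h 1)` of the class `α` of the based loop
`t ↦ h (exp (2 π i t))`. -/
theorem fundamentalGroup_freeLoopSpace_iso_centralizer {X : Type*} [TopologicalSpace X]
    (hX : ∀ n : ℕ, 2 ≤ n → ∀ x : X, Subsingleton (HomotopyGroup (Fin n) X x))
    (h : C(Circle, X)) (α : FundamentalGroup X (h 1)) (hα : α = loopClass h rfl) :
    Nonempty (FundamentalGroup C(Circle, X) h ≃*
      Subgroup.centralizer ({α} : Set (FundamentalGroup X (h 1)))) :=
  fundamentalGroup_freeLoopSpace_iso_centralizer_general h (hX 2 le_rfl (h 1)) α hα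
end

section
/- The free loop space of an aspherical space is aspherical: if X is an aspherical topological space, then for every h : C(Circle, X) and every n ≥ 2, the homotopy group HomotopyGroup n C(Circle, X) h is trivial (a subsingleton). -/
/-!
Evaluation at `1` behaves like a fibration `ΩX → LX → X` of the free loop space over `X`. If
`π_n X` is trivial, the evaluation of an `n`-spheroid of free loops is null-homotopic, and lifting
a null-homotopy deforms the spheroid until all its loops are based at `h 1`. Such a spheroid,
regarded as a map on the `(n + 1)`-cube, agrees on the boundary with the one that is constantly
equal to `h`, and since `π_{n+1} X` is trivial the two are homotopic relative to the boundary.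
-/

open Set Topology unitInterval

theorem exists_continuousOn_union_eqOn {X Y : Type*} [TopologicalSpace X] [TopologicalSpace Y]
    {A B : Set Y} {f g : Y → X} (hA : IsClosed A) (hB : IsClosed B) (hf : ContinuousOn f A)
    (hg : ContinuousOn g B) (hfg : EqOn f g (A ∩ B)) :
    ∃ φ : Y → X, ContinuousOn φ (A ∪ B) ∧ EqOn φ f A ∧ EqOn φ g B := by
  classical
  have eqA : EqOn (A.piecewise f g) f A := A.piecewise_eqOn f g
  have eqB : EqOn (A.piecewise f g) g B := fun y hy ↦ by
    by_cases hyA : y ∈ A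
    · exact (eqA hyA).trans (hfg ⟨hyA, hy⟩)
    · exact A.piecewise_eq_of_notMem f g hyA
  exact ⟨A.piecewise f g, (hf.congr eqA).union_of_isClosed (hg.congr eqB) hA hB, eqA, eqB⟩

section Cube

variable {N : Type*}

theorem isClosed_cubeBoundary [Finite N] : IsClosed (Cube.boundary N) := by
  simp only [Cube.boundary, ofPred_exists]
  exact isClosed_iUnion_of_finite fun i ↦
    (isClosed_eq (continuous_apply i) continuous_const).union
      (isClosed_eq (continuous_apply i) continuous_const)

theorem mem_cubeBoundary_succ {n : ℕ} {z : I^Fin (n + 1)} :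
    z ∈ Cube.boundary (Fin (n + 1)) ↔
      (z 0 = 0 ∨ z 0 = 1) ∨ Fin.tail z ∈ Cube.boundary (Fin n) :=
  Fin.exists_fin_succ

theorem cons_mem_cubeBoundary {n : ℕ} {s : I} {y : I^Fin n} :
    Fin.cons s y ∈ Cube.boundary (Fin (n + 1)) ↔ (s = 0 ∨ s = 1) ∨ y ∈ Cube.boundary (Fin n) :=
  mem_cubeBoundary_succ

variable [Fintype N]

/-- The sup-norm distance of a point of the cube from the centre, scaled to take the value `1` on
the boundary. -/
noncomputable def cubeGauge (y : I^N) : ℝ := ‖fun i ↦ 2 * (y i : ℝ) - 1‖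

theorem continuous_cubeGauge : Continuous (cubeGauge : (I^N) → ℝ) := by
  unfold cubeGauge
  fun_prop

theorem abs_two_mul_sub_one_le (t : I) : |2 * (t : ℝ) - 1| ≤ 1 :=
  abs_le.2 ⟨by linarith [t.2.1], by linarith [t.2.2]⟩

theorem cubeGauge_le_one (y : I^N) : cubeGauge y ≤ 1 :=
  (pi_norm_le_iff_of_nonneg zero_le_one).2 fun i ↦ abs_two_mul_sub_one_le (y i)

theorem cubeGauge_eq_one {y : I^N} (hy : y ∈ Cube.boundary N) : cubeGauge y = 1 := by
  obtain ⟨i, hi⟩ := hy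
  have hi' : ‖2 * (y i : ℝ) - 1‖ = 1 := by rcases hi with hi | hi <;> norm_num [hi]
  exact (cubeGauge_le_one y).antisymm
    (hi'.ge.trans (norm_le_pi_norm (fun i ↦ 2 * (y i : ℝ) - 1) i))

/-- The retraction of `I × I^N` onto the bottom and the sides, by radial projection from the point
at height `2` above the centre of the cube. The factor `1 / max (1 - t / 2) (cubeGauge y)` scales
the ray through `(t, y)` until it hits the bottom or a side. -/
noncomputable def cubeRetraction : C(I × (I^N), I × (I^N)) where
  toFun p :=
    (projIcc 0 1 zero_le_one (2 - (2 - p.1) / max (1 - (p.1 : ℝ) / 2) (cubeGauge p.2)),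
      fun i ↦ projIcc 0 1 zero_le_one
        (((2 * p.2 i - 1) / max (1 - (p.1 : ℝ) / 2) (cubeGauge p.2) + 1) / 2))
  continuous_toFun := by
    have hgauge := continuous_cubeGauge (N := N)
    have hne : ∀ p : I × (I^N), max (1 - (p.1 : ℝ) / 2) (cubeGauge p.2) ≠ 0 := fun p ↦
      (lt_max_of_lt_left (by linarith [p.1.2.2])).ne'
    have := continuous_projIcc (a := (0 : ℝ)) (b := 1) (h := zero_le_one)
    fun_prop (disch := assumption)

theorem cubeRetraction_eq_self {p : I × (I^N)} (hp : p.1 = 0 ∨ p.2 ∈ Cube.boundary N) :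
    cubeRetraction p = p := by
  have hmax : max (1 - (p.1 : ℝ) / 2) (cubeGauge p.2) = 1 := by
    rcases hp with hp | hp
    · simpa [hp] using cubeGauge_le_one p.2
    · rw [cubeGauge_eq_one hp, max_eq_right (by linarith [p.1.2.1])]
  ext <;> simp [cubeRetraction, hmax]

theorem cubeRetraction_fst_eq_zero_or_snd_mem (p : I × (I^N)) :
    (cubeRetraction p).1 = 0 ∨ (cubeRetraction p).2 ∈ Cube.boundary N := by
  obtain ⟨t, y⟩ := p
  have ht : 0 < 1 - (t : ℝ) / 2 := by linarith [t.2.2]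
  rcases le_total (cubeGauge y) (1 - (t : ℝ) / 2) with h | h
  · left
    refine projIcc_of_le_left zero_le_one ?_
    rw [max_eq_left h, sub_nonpos, le_div_iff₀ ht]
    linarith
  · right
    have hpos : 0 < cubeGauge y := ht.trans_le h
    obtain ⟨i, hi⟩ : ∃ i, |2 * (y i : ℝ) - 1| = cubeGauge y := by
      by_contra! hne
      exact ((pi_norm_lt_iff hpos).2 fun i ↦ (norm_le_pi_norm _ i).lt_of_ne (hne i)).false
    refine ⟨i, ?_⟩
    simp only [cubeRetraction, ContinuousMap.coe_mk, max_eq_right h]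
    rcases (abs_eq hpos.le).1 hi with hi | hi
    · exact .inr (projIcc_of_right_le _ (by rw [hi, div_self hpos.ne']; norm_num))
    · exact .inl (projIcc_of_le_left _ (by rw [hi, neg_div, div_self hpos.ne']; norm_num))

end Cube

section HomotopyGroup

variable {X : Type*} [TopologicalSpace X]

theorem exists_homotopy_extending_boundary {N : Type*} [Finite N] (f : C(I^N, X))
    {H : I × (I^N) → X} (hH : ContinuousOn H {p | p.2 ∈ Cube.boundary N})
    (hfH : ∀ y ∈ Cube.boundary N, H (0, y) = f y) :
    ∃ G : C(I × (I^N), X), (∀ y, G (0, y) = f y) ∧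
      ∀ t, ∀ y ∈ Cube.boundary N, G (t, y) = H (t, y) := by
  cases nonempty_fintype N
  have agree : EqOn (fun p : I × (I^N) ↦ f p.2) H
      ({p | p.1 = 0} ∩ {p | p.2 ∈ Cube.boundary N}) := by
    rintro ⟨t, y⟩ ⟨rfl : t = 0, hy⟩
    exact (hfH y hy).symm
  obtain ⟨φ, hφ, hφf, hφH⟩ := exists_continuousOn_union_eqOn
    (isClosed_eq continuous_fst continuous_const)
    (isClosed_cubeBoundary.preimage continuous_snd) (by fun_prop) hH agree
  have cont : Continuous fun p ↦ φ (cubeRetraction p) :=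
    hφ.comp_continuous cubeRetraction.continuous cubeRetraction_fst_eq_zero_or_snd_mem
  refine ⟨⟨_, cont⟩, fun y ↦ ?_, fun t y hy ↦ ?_⟩
  · exact (congrArg φ (cubeRetraction_eq_self (.inl rfl))).trans (hφf rfl)
  · exact (congrArg φ (cubeRetraction_eq_self (.inr hy))).trans (hφH hy)

theorem homotopic_of_subsingleton_homotopyGroup {N : Type*} {x : X}
    [Subsingleton (HomotopyGroup N X x)] (f g : GenLoop N X x) : GenLoop.Homotopic f g :=
  Quotient.exact (Subsingleton.elim (α := HomotopyGroup N X x) ⟦f⟧ ⟦g⟧)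

theorem subsingleton_homotopyGroup_of_homotopic_const {N : Type*} {x : X}
    (h : ∀ f : GenLoop N X x, GenLoop.Homotopic f GenLoop.const) :
    Subsingleton (HomotopyGroup N X x) :=
  ⟨by rintro ⟨f⟩ ⟨g⟩; exact Quotient.sound ((h f).trans (h g).symm)⟩

variable {n : ℕ}

theorem homotopicRel_boundary_of_contracting_homotopy {f g : C(I^Fin n, X)}
    (hfg : EqOn f g (Cube.boundary (Fin n)))
    {G : C(I × (I^Fin n), X)} (hG0 : ∀ y, G (0, y) = f y)
    (hG : ∀ t, ∀ y ∈ Cube.boundary (Fin n), G (t, y) = g fun i ↦ σ t * y i)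
    (L : C(I × (I^Fin n), X)) (hL0 : ∀ y, L (0, y) = G (1, y)) (hL1 : ∀ y, L (1, y) = g 0)
    (hL : ∀ t, ∀ y ∈ Cube.boundary (Fin n), L (t, y) = g 0) :
    f.HomotopicRel g (Cube.boundary (Fin n)) := by
  -- Deform `L`, keeping its top face `z 0 = 1` and its sides on `g (p.1 * y)` while the bottom face
  -- runs back along `G` to `f`: the final map on the `(n + 1)`-cube is a homotopy from `f` to `g`.
  let A : Set (I × (I^Fin (n + 1))) := {p | p.2 0 = 0}
  let B : Set (I × (I^Fin (n + 1))) := {p | p.2 0 = 1 ∨ Fin.tail p.2 ∈ Cube.boundary (Fin n)}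
  have hA : IsClosed A := isClosed_eq (by fun_prop) continuous_const
  have hB : IsClosed B := (isClosed_eq (by fun_prop) continuous_const).union
    (isClosed_cubeBoundary.preimage (by fun_prop))
  have agree : EqOn (fun p : I × (I^Fin (n + 1)) ↦ G (σ p.1, Fin.tail p.2))
      (fun p ↦ g fun i ↦ p.1 * Fin.tail p.2 i) (A ∩ B) := by
    rintro ⟨t, z⟩ ⟨h0 : z 0 = 0, h1 | hz⟩
    · exact absurd (h0.symm.trans h1) zero_ne_one
    · simp [hG _ _ hz]
  obtain ⟨H, hH, hHA, hHB⟩ := exists_continuousOn_union_eqOn hA hB (by fun_prop) (by fun_prop) agree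
  let L' : C(I^Fin (n + 1), X) := ⟨fun z ↦ L (z 0, Fin.tail z), by fun_prop⟩
  have compat : ∀ z ∈ Cube.boundary (Fin (n + 1)), H (0, z) = L' z := by
    intro z hz
    rcases mem_cubeBoundary_succ.1 hz with (h0 | h1) | hz
    · simp [hHA (x := (0, z)) h0, L', h0, hL0]
    · simpa [L', h1, hL1] using! hHB (x := (0, z)) (.inl h1)
    · simpa [L', hL _ _ hz] using! hHB (x := (0, z)) (.inr hz)
  have sub : {p : I × (I^Fin (n + 1)) | p.2 ∈ Cube.boundary (Fin (n + 1))} ⊆ A ∪ B := fun _ hp ↦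
    or_assoc.1 (mem_cubeBoundary_succ.1 hp)
  obtain ⟨M, -, hM⟩ := exists_homotopy_extending_boundary L' (hH.mono sub) compat
  have hMA : ∀ y, M (1, Fin.cons 0 y) = f y := fun y ↦ by
    rw [hM _ _ (cons_mem_cubeBoundary.2 (.inl (.inl rfl))), hHA rfl]
    simp [hG0]
  have hMB : ∀ t y, t = 1 ∨ y ∈ Cube.boundary (Fin n) → M (1, Fin.cons t y) = g y := by
    intro t y hty
    have mem_B : (1, Fin.cons t y) ∈ B := hty
    rw [hM _ _ (cons_mem_cubeBoundary.2 (or_assoc.2 (.inr hty))), hHB mem_B]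
    simp
  exact ⟨⟨⟨⟨fun p ↦ M (1, Fin.cons p.1 p.2), by fun_prop⟩, hMA, fun y ↦ hMB 1 y (.inl rfl)⟩,
    fun t y hy ↦ (hMB t y (.inr hy)).trans (hfg hy).symm⟩⟩

theorem homotopicRel_boundary_of_subsingleton_homotopyGroup {f g : C(I^Fin n, X)}
    [Subsingleton (HomotopyGroup (Fin n) X (g 0))] (hfg : EqOn f g (Cube.boundary (Fin n))) :
    f.HomotopicRel g (Cube.boundary (Fin n)) := by
  obtain ⟨G, hG0, hG⟩ := exists_homotopy_extending_boundary f
    (H := fun p ↦ g fun i ↦ σ p.1 * p.2 i) (by fun_prop) fun y hy ↦ by simp [hfg hy]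
  let top : GenLoop (Fin n) X (g 0) :=
    ⟨⟨fun y ↦ G (1, y), by fun_prop⟩, fun y hy ↦ by simpa using! hG 1 y hy⟩
  obtain ⟨L⟩ := homotopic_of_subsingleton_homotopyGroup top GenLoop.const
  exact homotopicRel_boundary_of_contracting_homotopy hfg hG0 hG L.toContinuousMap
    L.apply_zero L.apply_one fun t y hy ↦ (L.eq_fst t hy).trans (top.2 y hy)

end HomotopyGroup

section Circle

/-- The parametrization of the circle by the unit interval, with both endpoints sent to `1`. It
identifies loops in `C(Circle, X)` with paths on `I` having equal endpoints. -/
noncomputable def circleParam : C(I, Circle) where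
  toFun s := Circle.exp (2 * Real.pi * s)

theorem circleParam_zero : circleParam 0 = 1 := by simp [circleParam]

theorem circleParam_one : circleParam 1 = 1 := by simp [circleParam]

theorem isQuotientMap_circleParam : IsQuotientMap circleParam := by
  refine .of_surjective_continuous (fun z ↦ ?_) circleParam.continuous
  obtain ⟨x, rfl⟩ := Circle.exp_surjective z
  obtain ⟨y, hy, hxy⟩ := Circle.periodic_exp.exists_mem_Ico₀ Real.two_pi_pos x
  refine ⟨⟨y / (2 * Real.pi), by have := hy.1; positivity, ?_⟩, ?_⟩
  · exact (div_le_one Real.two_pi_pos).2 hy.2.le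
  · simp [circleParam, hxy, mul_div_cancel₀ y Real.two_pi_pos.ne']

theorem eq_or_endpoints_of_circleParam_eq {s t : I} (h : circleParam s = circleParam t) :
    s = t ∨ s = 0 ∧ t = 1 ∨ s = 1 ∧ t = 0 := by
  obtain ⟨m, hm⟩ := Circle.exp_eq_exp.1 h
  have hst : (s : ℝ) = t + m := mul_left_cancel₀ Real.two_pi_pos.ne' (by linarith)
  have hlt : m < 2 := by exact_mod_cast (by linarith [s.2.2, t.2.1] : (m : ℝ) < 2)
  have hgt : -2 < m := by exact_mod_cast (by linarith [s.2.1, t.2.2] : (-2 : ℝ) < m)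
  simp only [Subtype.ext_iff, Icc.coe_zero, Icc.coe_one]
  obtain ⟨hs0, hs1⟩ := s.2
  obtain ⟨ht0, ht1⟩ := t.2
  interval_cases m
  · exact .inr (.inl (by push_cast at hst; constructor <;> linarith))
  · exact .inl (by simpa using hst)
  · exact .inr (.inr (by push_cast at hst; constructor <;> linarith))

variable {X : Type*} [TopologicalSpace X]

theorem ext_circleParam {γ δ : C(Circle, X)} (h : ∀ s, γ (circleParam s) = δ (circleParam s)) :
    γ = δ :=
  DFunLike.coe_injective (isQuotientMap_circleParam.surjective.injective_comp_right (funext h))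

theorem exists_loops_of_endpoints_eq {Y : Type*} [TopologicalSpace Y] [LocallyCompactSpace Y]
    (G : C(Y × I, X)) (hG : ∀ y, G (y, 0) = G (y, 1)) :
    ∃ Γ : C(Y, C(Circle, X)), ∀ y s, Γ y (circleParam s) = G (y, s) := by
  let γ : C(I, C(Y, X)) := (G.comp .prodSwap).curry
  have hγ : Function.FactorsThrough γ circleParam := fun s t hst ↦ by
    have endpoints : γ 0 = γ 1 := ContinuousMap.ext hG
    rcases eq_or_endpoints_of_circleParam_eq hst with rfl | ⟨rfl, rfl⟩ | ⟨rfl, rfl⟩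
    exacts [rfl, endpoints, endpoints.symm]
  let g : C(Circle, C(Y, X)) := isQuotientMap_circleParam.lift γ hγ
  have hg : ∀ s, g (circleParam s) = γ s :=
    DFunLike.congr_fun (isQuotientMap_circleParam.lift_comp γ hγ)
  exact ⟨(g.uncurry.comp .prodSwap).curry, fun y s ↦ DFunLike.congr_fun (hg s) y⟩

end Circle

section FreeLoopSpace

variable {X : Type*} [TopologicalSpace X] {n : ℕ}

/-- The map on the `(n + 1)`-cube adjoint to an `n`-cube of free loops. The loop parameter is the
zeroth coordinate. -/
noncomputable def loopCylinder (f : C(I^Fin n, C(Circle, X))) : C(I^Fin (n + 1), X) where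
  toFun z := f (Fin.tail z) (circleParam (z 0))

theorem loopCylinder_cons (f : C(I^Fin n, C(Circle, X))) (s : I) (y : I^Fin n) :
    loopCylinder f (Fin.cons s y) = f y (circleParam s) := rfl

theorem loopCylinder_eq_eval_one (f : C(I^Fin n, C(Circle, X))) {z : I^Fin (n + 1)}
    (hz : z 0 = 0 ∨ z 0 = 1) : loopCylinder f z = f (Fin.tail z) 1 := by
  rcases hz with h | h <;> simp [loopCylinder, h, circleParam_zero, circleParam_one]

theorem exists_homotopy_loops (M : C(I × (I^Fin (n + 1)), X))
    (hM : ∀ t y, M (t, Fin.cons 0 y) = M (t, Fin.cons 1 y)) :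
    ∃ Γ : C(I × (I^Fin n), C(Circle, X)),
      ∀ t y s, Γ (t, y) (circleParam s) = M (t, Fin.cons s y) := by
  let G : C((I × (I^Fin n)) × I, X) := ⟨fun p ↦ M (p.1.1, Fin.cons p.2 p.1.2), by fun_prop⟩
  obtain ⟨Γ, hΓ⟩ := exists_loops_of_endpoints_eq G fun p ↦ hM p.1 p.2
  exact ⟨Γ, fun t y ↦ hΓ (t, y)⟩

theorem exists_homotopy_loopCylinder_extending
    (f : C(I^Fin n, C(Circle, X))) (K : C(I × (I^Fin n), X)) (hK0 : ∀ y, K (0, y) = f y 1)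
    (hK : ∀ t, ∀ y ∈ Cube.boundary (Fin n), K (t, y) = f y 1) :
    ∃ M : C(I × (I^Fin (n + 1)), X), (∀ z, M (0, z) = loopCylinder f z) ∧
      (∀ t s y, s = 0 ∨ s = 1 → M (t, Fin.cons s y) = K (t, y)) ∧
      ∀ t s, ∀ y ∈ Cube.boundary (Fin n), M (t, Fin.cons s y) = f y (circleParam s) := by
  let A : Set (I × (I^Fin (n + 1))) := {p | p.2 0 = 0 ∨ p.2 0 = 1}
  let B : Set (I × (I^Fin (n + 1))) := {p | Fin.tail p.2 ∈ Cube.boundary (Fin n)}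
  have hA : IsClosed A := (isClosed_eq (by fun_prop) continuous_const).union
    (isClosed_eq (by fun_prop) continuous_const)
  have hB : IsClosed B := isClosed_cubeBoundary.preimage (by fun_prop)
  obtain ⟨H, hH, hHA, hHB⟩ := exists_continuousOn_union_eqOn
    (f := fun p : I × (I^Fin (n + 1)) ↦ K (p.1, Fin.tail p.2)) (g := fun p ↦ loopCylinder f p.2)
    hA hB (by fun_prop) (by fun_prop)
    fun p hp ↦ (hK _ _ hp.2).trans (loopCylinder_eq_eval_one f hp.1).symm
  have compat : ∀ z ∈ Cube.boundary (Fin (n + 1)), H (0, z) = loopCylinder f z := by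
    intro z hz
    rcases mem_cubeBoundary_succ.1 hz with hz | hz
    · exact (hHA (x := (0, z)) hz).trans ((hK0 _).trans (loopCylinder_eq_eval_one f hz).symm)
    · exact hHB (x := (0, z)) hz
  obtain ⟨M, hM0, hM⟩ := exists_homotopy_extending_boundary (loopCylinder f)
    (hH.mono fun _ hp ↦ mem_cubeBoundary_succ.1 hp) compat
  refine ⟨M, hM0, fun t s y hs ↦ ?_, fun t s y hy ↦ ?_⟩
  · exact (hM _ _ (cons_mem_cubeBoundary.2 (.inl hs))).trans (hHA (x := (t, Fin.cons s y)) hs)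
  · exact (hM _ _ (cons_mem_cubeBoundary.2 (.inr hy))).trans (hHB (x := (t, Fin.cons s y)) hy)

theorem exists_homotopy_lift_eval_one
    (f : C(I^Fin n, C(Circle, X))) (K : C(I × (I^Fin n), X)) (hK0 : ∀ y, K (0, y) = f y 1)
    (hK : ∀ t, ∀ y ∈ Cube.boundary (Fin n), K (t, y) = f y 1) :
    ∃ Γ : C(I × (I^Fin n), C(Circle, X)), (∀ y, Γ (0, y) = f y) ∧
      (∀ t, ∀ y ∈ Cube.boundary (Fin n), Γ (t, y) = f y) ∧ ∀ t y, Γ (t, y) 1 = K (t, y) := by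
  obtain ⟨M, hM0, hMK, hMf⟩ := exists_homotopy_loopCylinder_extending f K hK0 hK
  obtain ⟨Γ, hΓ⟩ := exists_homotopy_loops M fun t y ↦
    (hMK t 0 y (.inl rfl)).trans (hMK t 1 y (.inr rfl)).symm
  refine ⟨Γ, fun y ↦ ext_circleParam fun s ↦ ?_, fun t y hy ↦ ext_circleParam fun s ↦ ?_,
    fun t y ↦ ?_⟩
  · rw [hΓ, hM0, loopCylinder_cons]
  · rw [hΓ, hMf t s y hy]
  · rw [← circleParam_zero, hΓ, hMK t 0 y (.inl rfl)]

variable {h : C(Circle, X)}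

theorem exists_homotopic_apply_one_eq [Subsingleton (HomotopyGroup (Fin n) X (h 1))]
    (f : GenLoop (Fin n) C(Circle, X) h) :
    ∃ g : GenLoop (Fin n) C(Circle, X) h, GenLoop.Homotopic f g ∧ ∀ y, g y 1 = h 1 := by
  let evalLoop : GenLoop (Fin n) X (h 1) := ⟨⟨fun y ↦ f y 1, by fun_prop⟩, fun y hy ↦
    DFunLike.congr_fun (f.2 y hy) 1⟩
  obtain ⟨K⟩ := homotopic_of_subsingleton_homotopyGroup evalLoop GenLoop.const
  obtain ⟨Γ, hΓ0, hΓ, hΓK⟩ := exists_homotopy_lift_eval_one f.1 K.toContinuousMap K.apply_zero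
    fun t y hy ↦ K.eq_fst t hy
  let g : GenLoop (Fin n) C(Circle, X) h :=
    ⟨⟨fun y ↦ Γ (1, y), by fun_prop⟩, fun y hy ↦ (hΓ 1 y hy).trans (f.2 y hy)⟩
  exact ⟨g, ⟨⟨⟨Γ, hΓ0, fun _ ↦ rfl⟩, hΓ⟩⟩, fun y ↦ (hΓK 1 y).trans (K.apply_one y)⟩

theorem homotopic_const_of_apply_one_eq [Subsingleton (HomotopyGroup (Fin (n + 1)) X (h 1))]
    (f : GenLoop (Fin n) C(Circle, X) h) (hf : ∀ y, f y 1 = h 1) :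
    GenLoop.Homotopic f GenLoop.const := by
  let c : C(I^Fin n, C(Circle, X)) := .const _ h
  have hfc : EqOn (loopCylinder f.1) (loopCylinder c) (Cube.boundary (Fin (n + 1))) := by
    intro z hz
    rcases mem_cubeBoundary_succ.1 hz with hz | hz
    · exact (loopCylinder_eq_eval_one f.1 hz).trans
        ((hf _).trans (loopCylinder_eq_eval_one c hz).symm)
    · exact DFunLike.congr_fun (f.2 _ hz) _
  have : Subsingleton (HomotopyGroup (Fin (n + 1)) X (loopCylinder c 0)) := by
    rwa [loopCylinder_eq_eval_one c (.inl rfl)]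
  obtain ⟨M⟩ := homotopicRel_boundary_of_subsingleton_homotopyGroup hfc
  have hM : ∀ t s y, s = 0 ∨ s = 1 → M (t, Fin.cons s y) = h 1 := fun t s y hs ↦
    (M.eq_fst t (cons_mem_cubeBoundary.2 (.inl hs))).trans
      ((loopCylinder_eq_eval_one f.1 hs).trans (hf y))
  obtain ⟨Γ, hΓ⟩ := exists_homotopy_loops M.toContinuousMap fun t y ↦
    (hM t 0 y (.inl rfl)).trans (hM t 1 y (.inr rfl)).symm
  refine ⟨⟨⟨Γ, fun y ↦ ?_, fun y ↦ ?_⟩, fun t y hy ↦ ?_⟩⟩ <;>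
    refine ext_circleParam fun s ↦ (hΓ _ _ _).trans ?_
  · exact M.apply_zero _
  · exact M.apply_one _
  · exact (M.eq_fst t (cons_mem_cubeBoundary.2 (.inr hy))).trans
      (loopCylinder_cons f.1 s y)

theorem freeLoopSpace_aspherical_general (h : C(Circle, X))
    (hn : Subsingleton (HomotopyGroup (Fin n) X (h 1)))
    (hn' : Subsingleton (HomotopyGroup (Fin (n + 1)) X (h 1))) :
    Subsingleton (HomotopyGroup (Fin n) C(Circle, X) h) := by
  refine subsingleton_homotopyGroup_of_homotopic_const fun f ↦ ?_
  obtain ⟨g, hfg, hg⟩ := exists_homotopic_apply_one_eq f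
  exact hfg.trans (homotopic_const_of_apply_one_eq g hg)

end FreeLoopSpace

/-- The free loop space of an aspherical space is aspherical: if all homotopy groups
`π_n X x` with `n ≥ 2` are trivial, then so are all `π_n C(Circle, X) h` with `n ≥ 2`. -/
theorem freeLoopSpace_aspherical {X : Type*} [TopologicalSpace X]
    (hX : ∀ n : ℕ, 2 ≤ n → ∀ x : X, Subsingleton (HomotopyGroup (Fin n) X x))
    (h : C(Circle, X)) (n : ℕ) (hn : 2 ≤ n) :
    Subsingleton (HomotopyGroup (Fin n) C(Circle, X) h) :=
  freeLoopSpace_aspherical_general h (hX n hn _) (hX (n + 1) (by omega) _)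
end
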